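/- Substituted form of Andrews's identity: for every nonnegative integer m and complex y, z avoiding poles, Σ_{k=0}^{2m+1} (-2m-1)_k (y+2z+2m+2)_k (y+z+1/2)_k (y+2z+m+1)_k (z+m+1)_k / (k! (y/2+z+1/2)_k (y/2+z+1)_k (2z+2m+2)_k (2y+2z+1)_k) = 0. -/

import Mathlib

/-- The rising factorial (Pochhammer symbol) `(a)_k`. -/
noncomputable def rf (a : ℂ) (k : ℕ) : ℂ := (ascPochhammer ℂ k).eval a

open PowerSeries in
lemma coeff_T (s r : ℕ) : coeff r ((1 - X : PowerSeries ℤ)^s) = (-1)^r * (s.choose r : ℤ) := by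
  have h : (1 - X : PowerSeries ℤ) = (((1:Polynomial ℤ) + Polynomial.X).comp (Polynomial.C (-1) * Polynomial.X) : Polynomial ℤ) := by
    simp [sub_eq_add_neg]
  rw [h, ← Polynomial.coe_pow, Polynomial.coeff_coe, ← Polynomial.pow_comp,
    Polynomial.comp_C_mul_X_coeff, Polynomial.coeff_one_add_X_pow, mul_comm]

open PowerSeries in
lemma nat_id (M p : ℕ) (hp : 4 * M + 4 ≤ p) :
    ∑ i ∈ Finset.range (2 * M + 2), (-1 : ℤ)^i * (p.choose i : ℤ) *
      ((p + M - 2 * i).choose (2 * M + 1 - i) : ℤ) = 0 := by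
  set V : PowerSeries ℤ := mk 1 with hV
  have hVT : V * (1 - X) = 1 := mk_one_mul_one_sub_eq_one ℤ
  have hVTp : ∀ d e : ℕ, V ^ d * (1 - X) ^ (d + e) = (1 - X) ^ e := by
    intro d e
    rw [pow_add, ← mul_assoc, ← mul_pow, hVT, one_pow, one_mul]
  have hVTq : ∀ d e : ℕ, V ^ (d + e) * (1 - X) ^ e = V ^ d := by
    intro d e
    rw [pow_add, mul_assoc, ← mul_pow, hVT, one_pow, mul_one]
  have trunc : ∀ f : ℕ → ℤ, (∀ i, 2 * M + 1 < i → f i = 0) →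
      ∑ i ∈ Finset.range (p + 1), f i = ∑ i ∈ Finset.range (2 * M + 2), f i := by
    intro f hf
    symm
    apply Finset.sum_subset
    · intro i; simp only [Finset.mem_range]; omega
    · intro i _ h2
      apply hf
      simp only [Finset.mem_range] at h2; omega
  have e1 : coeff (2 * M + 1) (V ^ (p - M) * (X + (1 - X) ^ 2) ^ p) =
      ∑ i ∈ Finset.range (2 * M + 2), (-1 : ℤ)^(2 * M + 1 - i) * (p.choose i : ℤ) *
      ((p + M - 2 * i).choose (2 * M + 1 - i) : ℤ) := by
    rw [add_pow, Finset.mul_sum, map_sum, trunc]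
    · apply Finset.sum_congr rfl
      intro i hi
      simp only [Finset.mem_range] at hi
      have : V ^ (p - M) * (X ^ i * ((1 - X) ^ 2) ^ (p - i) * (p.choose i : PowerSeries ℤ)) =
          X ^ i * (C (p.choose i : ℤ) * (1 - X) ^ (p + M - 2 * i)) := by
        rw [← hVTp (p - M) (p + M - 2 * i), ← pow_mul,
          show p - M + (p + M - 2 * i) = 2 * (p - i) by omega]
        simp; ring
      rw [this, coeff_X_pow_mul', if_pos (by omega), coeff_C_mul, coeff_T]
      ring
    · intro i hi
      rw [show V ^ (p - M) * (X ^ i * ((1 - X) ^ 2) ^ (p - i) * (p.choose i : PowerSeries ℤ)) =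
          X ^ i * (V ^ (p - M) * ((1 - X) ^ 2) ^ (p - i) * (p.choose i : PowerSeries ℤ)) by ring,
        coeff_X_pow_mul', if_neg (by omega)]
  have e2 : coeff (2 * M + 1) (V ^ (p - M) * (-(X * (1 - X)) + 1) ^ p) =
      ∑ i ∈ Finset.range (2 * M + 2), (-1 : ℤ)^i * (p.choose i : ℤ) *
      ((p + M - 2 * i).choose (2 * M + 1 - i) : ℤ) := by
    rw [add_pow, Finset.mul_sum, map_sum, trunc]
    · apply Finset.sum_congr rfl
      intro i hi
      simp only [Finset.mem_range] at hi
      have : V ^ (p - M) * ((-(X * (1 - X))) ^ i * 1 ^ (p - i) * (p.choose i : PowerSeries ℤ)) =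
          X ^ i * (C ((-1)^i * p.choose i : ℤ) * V ^ (p - M - i - 1 + 1)) := by
        rw [← hVTq (p - M - i - 1 + 1) i,
          show p - M - i - 1 + 1 + i = p - M by omega, neg_pow, mul_pow]
        simp; ring
      rw [this, coeff_X_pow_mul', if_pos (by omega), coeff_C_mul, hV, mk_one_pow_eq_mk_choose_add,
        coeff_mk, show p - M - i - 1 + (2 * M + 1 - i) = p + M - 2 * i by omega]
      congr 2
      apply Nat.choose_symm_of_eq_add
      omega
    · intro i hi
      rw [show V ^ (p - M) * ((-(X * (1 - X))) ^ i * 1 ^ (p - i) * (p.choose i : PowerSeries ℤ)) =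
          X ^ i * (V ^ (p - M) * ((-1) ^ i * (1 - X) ^ i * (p.choose i : PowerSeries ℤ))) by
            rw [neg_pow, mul_pow]; ring,
        coeff_X_pow_mul', if_neg (by omega)]
  rw [show (-(X * (1 - X)) + 1 : PowerSeries ℤ) = X + (1 - X) ^ 2 by ring, e1] at e2
  have e3 : ∑ i ∈ Finset.range (2 * M + 2), (-1 : ℤ)^(2 * M + 1 - i) * (p.choose i : ℤ) *
      ((p + M - 2 * i).choose (2 * M + 1 - i) : ℤ) =
      - ∑ i ∈ Finset.range (2 * M + 2), (-1 : ℤ)^i * (p.choose i : ℤ) *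
      ((p + M - 2 * i).choose (2 * M + 1 - i) : ℤ) := by
    rw [← Finset.sum_neg_distrib]
    apply Finset.sum_congr rfl
    intro i hi
    simp only [Finset.mem_range] at hi
    have : (-1 : ℤ)^(2 * M + 1 - i) = - (-1)^i := by
      have h1 : (-1 : ℤ)^(2 * M + 1 - i) * (-1)^i = -1 := by
        rw [← pow_add, show 2 * M + 1 - i + i = 2 * M + 1 by omega]; simp [pow_succ]
      rcases neg_one_pow_eq_or ℤ i with h | h <;> rw [h] at h1 ⊢ <;> linarith
    rw [this]; ring
  linarith

lemma rf_zero (a : ℂ) : rf a 0 = 1 := by simp [rf]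

lemma rf_succ (a : ℂ) (k : ℕ) : rf a (k + 1) = rf a k * (a + k) := ascPochhammer_succ_eval k a

lemma rf_add (a : ℂ) (k l : ℕ) : rf a (k + l) = rf a k * rf (a + k) l := by
  induction l with
  | zero => simp [rf_zero]
  | succ l ih => rw [← add_assoc, rf_succ, rf_succ, ih]; push_cast; ring

lemma rf_left (a : ℂ) (k : ℕ) : rf a (k + 1) = a * rf (a + 1) k := by
  rw [add_comm k 1, rf_add, rf_succ, rf_zero]; simp

lemma rf_neg (n k : ℕ) : rf (-(n : ℂ)) k = (-1) ^ k * (n.descFactorial k : ℂ) := by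
  rw [rf, ascPochhammer_eval_neg_eq_descPochhammer, descPochhammer_eval_eq_descFactorial]

lemma rf_double (a : ℂ) (k : ℕ) : rf a (2 * k) = 4 ^ k * rf (a / 2) k * rf (a / 2 + 1 / 2) k := by
  induction k with
  | zero => simp [rf_zero]
  | succ k ih =>
    rw [show 2 * (k + 1) = 2 * k + 1 + 1 by ring, rf_succ, rf_succ, ih, rf_succ, rf_succ]
    push_cast; ring

lemma Qid (M : ℕ) (x : ℂ) : ∑ i ∈ Finset.range (2 * M + 2),
    (-1 : ℂ) ^ i * ((2 * M + 1).choose i : ℂ) * rf (x + 1 + 2 * i) (2 * M + 1 - i) *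
      rf (x + M + 1) i = 0 := by
  let P : Polynomial ℂ := ∑ i ∈ Finset.range (2 * M + 2),
    Polynomial.C ((-1 : ℂ) ^ i * ((2 * M + 1).choose i : ℂ)) *
      (ascPochhammer ℂ (2 * M + 1 - i)).comp (Polynomial.X + Polynomial.C (1 + 2 * (i : ℂ))) *
      (ascPochhammer ℂ i).comp (Polynomial.X + Polynomial.C ((M : ℂ) + 1))
  have hP : ∀ x : ℂ, P.eval x = ∑ i ∈ Finset.range (2 * M + 2),
    (-1 : ℂ) ^ i * ((2 * M + 1).choose i : ℂ) * rf (x + 1 + 2 * i) (2 * M + 1 - i) *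
      rf (x + M + 1) i := by
    intro x
    simp only [P, Polynomial.eval_finsetSum, Polynomial.eval_mul, Polynomial.eval_C,
      Polynomial.eval_comp, Polynomial.eval_add, Polynomial.eval_X, rf, add_assoc]
  have hroot : ∀ q : ℕ, P.eval (-((q + 4 * M + 4 + M + 1 : ℕ) : ℂ)) = 0 := by
    intro q
    have h := nat_id M (q + 4 * M + 4) (by omega)
    generalize hp : q + 4 * M + 4 = p at h
    have h' := congrArg (fun t : ℤ => -((2 * M + 1).factorial : ℂ) * (t : ℂ)) h
    simp only [Int.cast_zero, mul_zero] at h'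
    rw [hP, ← h']
    push_cast
    rw [Finset.mul_sum]
    apply Finset.sum_congr rfl
    intro i hi
    simp only [Finset.mem_range] at hi
    have a1 : -((p : ℂ) + M + 1) + M + 1 = -(p : ℂ) := by ring
    have a2 : -((p : ℂ) + M + 1) + 1 + 2 * i = -((p + M - 2 * i : ℕ) : ℂ) := by
      rw [Nat.cast_sub (by omega)]; push_cast; ring
    rw [a1, a2, rf_neg, rf_neg, Nat.descFactorial_eq_factorial_mul_choose,
      Nat.descFactorial_eq_factorial_mul_choose]
    have hf := Nat.choose_mul_factorial_mul_factorial (show i ≤ 2 * M + 1 by omega)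
    have hf' : ((2 * M + 1).choose i : ℂ) * i.factorial * (2 * M + 1 - i).factorial =
      (2 * M + 1).factorial := by exact_mod_cast hf
    have hs : (-1 : ℂ)^(2 * M + 1 - i) * (-1)^i = -1 := by
      rw [← pow_add, show 2 * M + 1 - i + i = 2 * M + 1 by omega]; simp [pow_succ]
    rw [← hf']
    push_cast
    linear_combination ((-1 : ℂ)^i * ((2 * M + 1).choose i : ℂ) * i.factorial *
      (2 * M + 1 - i).factorial * (p.choose i : ℂ) *
      ((p + M - 2 * i).choose (2 * M + 1 - i) : ℂ)) * hs
  have hP0 : P = 0 := by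
    apply Polynomial.eq_zero_of_infinite_isRoot
    apply Set.infinite_of_injective_forall_mem
      (f := fun q : ℕ => -((q + 4 * M + 4 + M + 1 : ℕ) : ℂ))
    · intro a b hab
      simp only [neg_inj, Nat.cast_inj] at hab
      omega
    · intro q; exact hroot q
  rw [← hP, hP0, Polynomial.eval_zero]

lemma saal_step (m : ℕ) (b c : ℂ) (hb : ∀ j ≤ m, rf (b + 1 / 2) j ≠ 0)
    (hc : ∀ j ≤ m, rf (c + 1 / 2) j ≠ 0) (k : ℕ) (J : ℕ) (hJ : J ≤ m) :
    ∑ j ∈ Finset.range (J + 1), ((2 * b + k) * (2 * c + k) *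
      (rf (-((k + 1 : ℕ) : ℂ)) (2 * j) * rf (b + c - 1 / 2 + (k + 1 : ℕ)) j /
        (4 ^ j * j.factorial * rf (b + 1 / 2) j * rf (c + 1 / 2) j)) -
      4 * (b + k) * (c + k) * (rf (-(k : ℂ)) (2 * j) * rf (b + c - 1 / 2 + k) j /
        (4 ^ j * j.factorial * rf (b + 1 / 2) j * rf (c + 1 / 2) j))) =
    (2 * (b + c - 1 / 2) + 1 + 3 * k) * (rf (-(k : ℂ)) (2 * J + 1) *
      rf (b + c - 1 / 2 + k + 1) J /
        (4 ^ J * J.factorial * rf (b + 1 / 2) J * rf (c + 1 / 2) J)) := by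
  induction J with
  | zero => simp [rf_zero, rf_succ]; ring
  | succ j ih =>
    rw [Finset.sum_range_succ, ih (by omega)]
    have h1 := hb (j + 1) hJ
    have h2 := hc (j + 1) hJ
    rw [rf_succ] at h1 h2
    obtain ⟨h1a, h1b⟩ := mul_ne_zero_iff.1 h1
    obtain ⟨h2a, h2b⟩ := mul_ne_zero_iff.1 h2
    have e1 : rf (-((k + 1 : ℕ) : ℂ)) (2 * (j + 1)) = (-(k : ℂ) - 1) * rf (-(k : ℂ)) (2 * j + 1) := by
      rw [show 2 * (j + 1) = 2 * j + 1 + 1 by ring, rf_left]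
      push_cast
      rw [show -((k : ℂ) + 1) + 1 = -k by ring]; ring
    have e2 : rf (-(k : ℂ)) (2 * (j + 1)) = rf (-(k : ℂ)) (2 * j + 1) * (-k + 2 * j + 1) := by
      rw [show 2 * (j + 1) = 2 * j + 1 + 1 by ring, rf_succ]; push_cast; ring
    have e3 : rf (-(k : ℂ)) (2 * (j + 1) + 1) =
        rf (-(k : ℂ)) (2 * j + 1) * (-k + 2 * j + 1) * (-k + 2 * j + 2) := by
      rw [rf_succ, e2]; push_cast; ring
    have e4 : rf (b + c - 1 / 2 + k) (j + 1) =
        (b + c - 1 / 2 + k) * rf (b + c - 1 / 2 + k + 1) j := rf_left _ _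
    have e5 : b + c - 1 / 2 + ((k + 1 : ℕ) : ℂ) = b + c - 1 / 2 + k + 1 := by push_cast; ring
    rw [e1, e2, e3, e4, e5, rf_succ (b + c - 1 / 2 + k + 1), rf_succ (b + 1 / 2),
      rf_succ (c + 1 / 2), Nat.factorial_succ, pow_succ]
    generalize rf (-(k : ℂ)) (2 * j + 1) = A
    generalize rf (b + c - 1 / 2 + k + 1) j = B
    generalize rf (b + 1 / 2) j = D at *
    generalize rf (c + 1 / 2) j = E at *
    have hj : ((j.factorial : ℕ) : ℂ) ≠ 0 := by exact_mod_cast j.factorial_ne_zero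
    have hj1 : (j : ℂ) + 1 ≠ 0 := by exact_mod_cast j.succ_ne_zero
    push_cast
    generalize ((j.factorial : ℕ) : ℂ) = f at *
    have h4 : (4 : ℂ) ^ j ≠ 0 := pow_ne_zero _ (by norm_num)
    generalize (4 : ℂ) ^ j = g at *
    generalize hu : b + 1 / 2 + (j : ℂ) = u at *
    generalize hv : c + 1 / 2 + (j : ℂ) = v at *
    obtain rfl : b = u - j - 1 / 2 := by rw [← hu]; ring
    obtain rfl : c = v - j - 1 / 2 := by rw [← hv]; ring
    field_simp
    ring

lemma saal (m : ℕ) (b c : ℂ) (hb : ∀ j ≤ m, rf (b + 1 / 2) j ≠ 0)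
    (hc : ∀ j ≤ m, rf (c + 1 / 2) j ≠ 0) (k : ℕ) (hk : k ≤ 2 * m + 1) :
    rf (2 * b) k * rf (2 * c) k * ∑ j ∈ Finset.range (m + 1),
      (rf (-(k : ℂ)) (2 * j) * rf (b + c - 1 / 2 + k) j /
        (4 ^ j * j.factorial * rf (b + 1 / 2) j * rf (c + 1 / 2) j)) =
    4 ^ k * rf b k * rf c k := by
  induction k with
  | zero =>
    rw [Finset.sum_range_succ', Finset.sum_eq_zero]
    · simp [rf_zero]
    · intro j _
      rw [rf_neg, Nat.descFactorial_eq_zero_iff_lt.2 (by omega)]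
      simp
  | succ k ih =>
    have ih := ih (by omega)
    have st := saal_step m b c hb hc k m le_rfl
    rw [rf_neg k (2 * m + 1), Nat.descFactorial_eq_zero_iff_lt.2 (by omega), Finset.sum_sub_distrib,
      ← Finset.mul_sum, ← Finset.mul_sum] at st
    simp only [Nat.cast_zero, mul_zero, zero_mul, zero_div] at st
    rw [rf_succ, rf_succ, rf_succ, rf_succ, pow_succ]
    linear_combination rf (2 * b) k * rf (2 * c) k * st + 4 * (b + k) * (c + k) * ih

lemma inner (m j : ℕ) (hj : j ≤ m) (x : ℂ) (hx : rf (x + 1) (2 * (2 * m + 1)) ≠ 0) :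
    ∑ k ∈ Finset.range (2 * m + 2), rf (-((2 * m + 1 : ℕ) : ℂ)) k * rf (x + 2 * m + 2) k *
      rf (x + m + 1) (k + j) * rf (-(k : ℂ)) (2 * j) / (k.factorial * rf (x + 1) (2 * k)) = 0 := by
  have hne : ∀ k ≤ 2 * (2 * m + 1), rf (x + 1) k ≠ 0 := by
    intro k hk h0
    apply hx
    rw [← Nat.add_sub_cancel' hk, rf_add, h0, zero_mul]
  obtain ⟨M, rfl⟩ := Nat.exists_eq_add_of_le hj
  have hQ := Qid M (x + 4 * j)
  rw [show 2 * (j + M) + 2 = 2 * j + (2 * M + 2) by ring, Finset.sum_range_add,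
    Finset.sum_eq_zero, zero_add]
  · have := congrArg (fun t => (2 * (j + M) + 1).descFactorial (2 * j) * rf (x + (j + M : ℕ) + 1) (3 * j) /
      rf (x + 1) (2 * (j + M) + 1) * t) hQ
    simp only [mul_zero] at this
    rw [← this, Finset.mul_sum]
    apply Finset.sum_congr rfl
    intro i hi
    simp only [Finset.mem_range] at hi
    have a1 : rf (x + (j + M : ℕ) + 1) (2 * j + i + j) = rf (x + (j + M : ℕ) + 1) (3 * j) *
        rf (x + 4 * j + M + 1) i := by
      rw [show 2 * j + i + j = 3 * j + i by ring, rf_add]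
      congr 2; push_cast; ring
    have a2 : rf (x + 1) (2 * (j + M) + 1) * rf (x + 2 * (j + M : ℕ) + 2) (2 * j + i) =
        rf (x + 1) (2 * (2 * j + i)) * rf (x + 4 * j + 1 + 2 * i) (2 * M + 1 - i) := by
      rw [show x + 2 * (j + M : ℕ) + 2 = x + 1 + (2 * (j + M) + 1 : ℕ) by push_cast; ring, ← rf_add,
        show x + 4 * j + 1 + 2 * i = x + 1 + (2 * (2 * j + i) : ℕ) by push_cast; ring, ← rf_add]
      congr 1; omega
    have a3 : ((2 * (j + M) + 1).descFactorial (2 * j + i) * (2 * j + i).descFactorial (2 * j)) =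
        (2 * j + i).factorial * ((2 * (j + M) + 1).descFactorial (2 * j) * (2 * M + 1).choose i) := by
      have c1 := Nat.descFactorial_eq_factorial_mul_choose (2 * (j + M) + 1) (2 * j + i)
      have c2 := Nat.descFactorial_eq_factorial_mul_choose (2 * j + i) (2 * j)
      have c3 := Nat.descFactorial_eq_factorial_mul_choose (2 * (j + M) + 1) (2 * j)
      have c4 := Nat.choose_mul (n := 2 * (j + M) + 1) (k := 2 * j + i) (s := 2 * j) (by omega)
      rw [show 2 * (j + M) + 1 - 2 * j = 2 * M + 1 by omega, Nat.add_sub_cancel_left] at c4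
      rw [c1, c2, c3]
      calc _ = (2 * j + i).factorial * (2 * j).factorial * ((2 * (j + M) + 1).choose (2 * j + i) * (2 * j + i).choose (2 * j)) := by ring
        _ = _ := by rw [c4]; ring
    have a3' : (((2 * (j + M) + 1).descFactorial (2 * j + i) : ℕ) : ℂ) * ((2 * j + i).descFactorial (2 * j) : ℕ) =
        (2 * j + i).factorial * (((2 * (j + M) + 1).descFactorial (2 * j) : ℕ) * ((2 * M + 1).choose i : ℕ)) := by
      exact_mod_cast a3
    have n1 := hne (2 * (j + M) + 1) (by omega)
    have n2 := hne (2 * (2 * j + i)) (by omega)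
    have n3 : (((2 * j + i).factorial : ℕ) : ℂ) ≠ 0 := by exact_mod_cast Nat.factorial_ne_zero _
    rw [a1, rf_neg, rf_neg, div_mul_eq_mul_div, div_eq_div_iff (mul_ne_zero n3 n2) n1]
    have s1 : (-1 : ℂ) ^ (2 * j) = 1 := by simp [pow_mul]
    rw [pow_add, s1]
    generalize rf (x + 1) (2 * (j + M) + 1) = r1 at *
    generalize rf (x + 1) (2 * (2 * j + i)) = r2 at *
    generalize rf (x + 2 * (j + M : ℕ) + 2) (2 * j + i) = r3 at *
    generalize rf (x + 4 * j + 1 + 2 * i) (2 * M + 1 - i) = r4 at *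
    generalize rf (x + (j + M : ℕ) + 1) (3 * j) = r5 at *
    generalize rf (x + 4 * j + M + 1) i = r6 at *
    generalize (((2 * (j + M) + 1).descFactorial (2 * j + i) : ℕ) : ℂ) = d1 at *
    generalize (((2 * j + i).descFactorial (2 * j) : ℕ) : ℂ) = d2 at *
    generalize (((2 * (j + M) + 1).descFactorial (2 * j) : ℕ) : ℂ) = d3 at *
    generalize (((2 * M + 1).choose i : ℕ) : ℂ) = d4 at *
    generalize (((2 * j + i).factorial : ℕ) : ℂ) = d5 at *
    linear_combination (-1 : ℂ)^i * r5 * r6 * (d1 * d2 * a2 + r2 * r4 * a3')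
  · intro k hk
    simp only [Finset.mem_range] at hk
    rw [rf_neg k, Nat.descFactorial_eq_zero_iff_lt.2 hk]
    simp

lemma half_ne (m : ℕ) (b : ℂ) (h : ∀ k ≤ 2 * m + 1, rf (2 * b) k ≠ 0) :
    ∀ j ≤ m, rf (b + 1 / 2) j ≠ 0 := by
  intro j hj h0
  apply h (2 * j) (by omega)
  rw [rf_double, show 2 * b / 2 = b by ring, h0, mul_zero]

theorem andrews_5F4_substituted (m : ℕ) (y z : ℂ)
    (h1 : ∀ k ≤ 2 * m + 1, rf (y / 2 + z + 1 / 2) k ≠ 0)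
    (h2 : ∀ k ≤ 2 * m + 1, rf (y / 2 + z + 1) k ≠ 0)
    (h3 : ∀ k ≤ 2 * m + 1, rf (2 * z + 2 * m + 2) k ≠ 0)
    (h4 : ∀ k ≤ 2 * m + 1, rf (2 * y + 2 * z + 1) k ≠ 0) :
    ∑ k ∈ Finset.range (2 * m + 2),
        rf (-2 * m - 1) k * rf (y + 2 * z + 2 * m + 2) k * rf (y + z + 1 / 2) k *
            rf (y + 2 * z + m + 1) k * rf (z + m + 1) k /
          ((k.factorial : ℂ) * rf (y / 2 + z + 1 / 2) k * rf (y / 2 + z + 1) k *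
            rf (2 * z + 2 * m + 2) k * rf (2 * y + 2 * z + 1) k) = 0 := by
  have eb : 2 * y + 2 * z + 1 = 2 * (y + z + 1 / 2) := by ring
  have ec : 2 * z + 2 * m + 2 = 2 * (z + m + 1) := by ring
  simp only [eb] at h4 ⊢
  simp only [ec] at h3 ⊢
  have hb := half_ne m _ h4
  have hc := half_ne m _ h3
  have dbl : ∀ k, rf (y + 2 * z + 1) (2 * k) =
      4 ^ k * rf (y / 2 + z + 1 / 2) k * rf (y / 2 + z + 1) k := by
    intro k
    rw [rf_double]; congr 2 <;> [congr 1; skip] <;> ring_nf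
  have hx : rf (y + 2 * z + 1) (2 * (2 * m + 1)) ≠ 0 := by
    rw [dbl]
    exact mul_ne_zero (mul_ne_zero (pow_ne_zero _ (by norm_num)) (h1 _ le_rfl)) (h2 _ le_rfl)
  have key : ∀ k ∈ Finset.range (2 * m + 2),
        rf (-2 * m - 1) k * rf (y + 2 * z + 2 * m + 2) k * rf (y + z + 1 / 2) k *
            rf (y + 2 * z + m + 1) k * rf (z + m + 1) k /
          ((k.factorial : ℂ) * rf (y / 2 + z + 1 / 2) k * rf (y / 2 + z + 1) k *
            rf (2 * (z + m + 1)) k * rf (2 * (y + z + 1 / 2)) k) =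
      ∑ j ∈ Finset.range (m + 1), 1 / (4 ^ j * j.factorial * rf (y + z + 1 / 2 + 1 / 2) j *
          rf (z + m + 1 + 1 / 2) j) *
        (rf (-((2 * m + 1 : ℕ) : ℂ)) k * rf (y + 2 * z + 2 * m + 2) k *
      rf (y + 2 * z + m + 1) (k + j) * rf (-(k : ℂ)) (2 * j) /
        (k.factorial * rf (y + 2 * z + 1) (2 * k))) := by
    intro k hk
    have hk' : k ≤ 2 * m + 1 := by simp only [Finset.mem_range] at hk; omega
    have S := saal m _ _ hb hc k hk'
    have g1 := h1 k hk'
    have g2 := h2 k hk'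
    have g3 := h3 k hk'
    have g4 := h4 k hk'
    have n3 : ((k.factorial : ℕ) : ℂ) ≠ 0 := by exact_mod_cast Nat.factorial_ne_zero _
    have n4 : (4 : ℂ) ^ k ≠ 0 := pow_ne_zero _ (by norm_num)
    have e1 : (-2 * m - 1 : ℂ) = -((2 * m + 1 : ℕ) : ℂ) := by push_cast; ring
    have e2 : y + z + 1 / 2 + (z + m + 1) - 1 / 2 = y + 2 * z + m + 1 := by ring
    rw [e2] at S
    rw [e1]
    trans (rf (-((2 * m + 1 : ℕ) : ℂ)) k * rf (y + 2 * z + 2 * m + 2) k *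
      rf (y + 2 * z + m + 1) k / (k.factorial * rf (y + 2 * z + 1) (2 * k))) *
      ∑ j ∈ Finset.range (m + 1),
      (rf (-(k : ℂ)) (2 * j) * rf (y + 2 * z + m + 1 + k) j /
        (4 ^ j * j.factorial * rf (y + z + 1 / 2 + 1 / 2) j * rf (z + m + 1 + 1 / 2) j))
    · have S' := (eq_div_iff (mul_ne_zero g4 g3)).2 ((mul_comm _ _).trans S)
      rw [S', dbl]
      generalize rf (y / 2 + z + 1 / 2) k = r1 at *
      generalize rf (y / 2 + z + 1) k = r2 at *
      generalize rf (2 * (z + m + 1)) k = r3 at *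
      generalize rf (2 * (y + z + 1 / 2)) k = r4 at *
      field_simp
    · rw [Finset.mul_sum]
      apply Finset.sum_congr rfl
      intro j _
      rw [rf_add]
      simp only [div_eq_mul_inv, mul_inv]
      ring
  rw [Finset.sum_congr rfl key, Finset.sum_comm]
  apply Finset.sum_eq_zero
  intro j hj
  rw [← Finset.mul_sum, inner m j (by simp only [Finset.mem_range] at hj; omega) _ hx, mul_zero]
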